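/- For the symmetric regularized incomplete beta function with p ∈ (0,1/2), the magnitude of the derivative |d/dj I_p(j,j)| is strictly decreasing in j > 0. -/

import Mathlib

/-!
The mixture representation
`I_p(j,j) = (2π)⁻¹ ∫ v, b(p,v)^j / (1+v²)`, with `b(p,v) = 4p(1-p) / (1 + (1-2p)²v²) ∈ (0,1)`,
exhibits `j ↦ I_p(j,j)` as a positive mixture of the decreasing exponentials `j ↦ b^j`
(so it is in fact completely monotone). Its derivative in `j` is minus the integral of the positive
function `b^j (-log b) / (1+v²)`, which is pointwise strictly decreasing in `j`.

For the representation (`regIncBeta_eq`), differentiate the integral in `p` (`hasDerivAt_mixture`):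
after the substitution `w = (1-2p)v`, the derivative is a constant multiple of
`p^(j-1) (1-p)^(j-1)`. The integral vanishes at `p = 0`, so it is a constant multiple of
`incBeta p j j` on `[0,1/2]`; the constant is fixed by evaluating at `p = 1/2`, where the integral is
`π` and `incBeta (1/2) j j` is half of `incBeta 1 j j` by symmetry.
-/

noncomputable def incBeta (x a b : ℝ) : ℝ :=
  ∫ t in (0:ℝ)..x, t ^ (a - 1) * (1 - t) ^ (b - 1)

noncomputable def regIncBeta (x a b : ℝ) : ℝ := incBeta x a b / incBeta 1 a b

open MeasureTheory Set Filter Topology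

/-- The base `b(p,v)` of the exponentials `j ↦ b^j` in the mixture. -/
noncomputable def mixBase (p v : ℝ) : ℝ := 4 * p * (1 - p) / (1 + (1 - 2 * p) ^ 2 * v ^ 2)

/-- The mixture `∫ v, b(p,v)^j / (1+v²)`, which equals `2π I_p(j,j)` for `0 < p < 1/2`. -/
noncomputable def mixture (j p : ℝ) : ℝ := ∫ v : ℝ, mixBase p v ^ j * (1 + v ^ 2)⁻¹

lemma mixBase_den_pos (p v : ℝ) : 0 < 1 + (1 - 2 * p) ^ 2 * v ^ 2 := by positivity

lemma mixBase_nonneg {p : ℝ} (h0 : 0 ≤ p) (h1 : p ≤ 1) (v : ℝ) : 0 ≤ mixBase p v :=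
  div_nonneg (mul_nonneg (by linarith) (by linarith)) (mixBase_den_pos p v).le

lemma mixBase_le_one (p v : ℝ) : mixBase p v ≤ 1 := by
  rw [mixBase, div_le_one (mixBase_den_pos p v)]
  nlinarith [sq_nonneg (1 - 2 * p), sq_nonneg ((1 - 2 * p) * v)]

lemma mixBase_pos {p : ℝ} (h0 : 0 < p) (h1 : p < 1) (v : ℝ) : 0 < mixBase p v :=
  div_pos (mul_pos (by linarith) (by linarith)) (mixBase_den_pos p v)

lemma mixBase_lt_one {p : ℝ} (h : p < 1 / 2) (v : ℝ) : mixBase p v < 1 := by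
  rw [mixBase, div_lt_one (mixBase_den_pos p v)]
  have : 0 < (1 - 2 * p) ^ 2 := by
    have : 0 < 1 - 2 * p := by linarith
    positivity
  nlinarith [sq_nonneg ((1 - 2 * p) * v)]

lemma continuous_mixBase (p : ℝ) : Continuous (mixBase p) := by
  unfold mixBase
  exact Continuous.div (by fun_prop) (by fun_prop) fun v => (mixBase_den_pos p v).ne'

lemma continuous_mixBase_left (v : ℝ) : Continuous fun p => mixBase p v := by
  unfold mixBase
  exact Continuous.div (by fun_prop) (by fun_prop) fun p => (mixBase_den_pos p v).ne'

lemma continuous_inv_one_add_sq : Continuous fun v : ℝ => (1 + v ^ 2)⁻¹ :=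
  Continuous.inv₀ (by fun_prop) fun v => by positivity

lemma continuous_integrand {j : ℝ} (hj : 0 < j) (p : ℝ) :
    Continuous fun v : ℝ => mixBase p v ^ j * (1 + v ^ 2)⁻¹ :=
  ((continuous_mixBase p).rpow_const fun _ => Or.inr hj.le).mul continuous_inv_one_add_sq

lemma norm_integrand_le {j p : ℝ} (hj : 0 < j) (h0 : 0 ≤ p) (h1 : p ≤ 1) (v : ℝ) :
    ‖mixBase p v ^ j * (1 + v ^ 2)⁻¹‖ ≤ (1 + v ^ 2)⁻¹ := by
  have hb := mixBase_nonneg h0 h1 v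
  have hv : 0 < (1 + v ^ 2)⁻¹ := by positivity
  rw [Real.norm_of_nonneg (mul_nonneg (Real.rpow_nonneg hb _) hv.le)]
  exact mul_le_of_le_one_left hv.le (Real.rpow_le_one hb (mixBase_le_one p v) hj.le)

lemma integrable_integrand {j p : ℝ} (hj : 0 < j) (h0 : 0 ≤ p) (h1 : p ≤ 1) :
    Integrable fun v : ℝ => mixBase p v ^ j * (1 + v ^ 2)⁻¹ :=
  integrable_inv_one_add_sq.mono' (continuous_integrand hj p).aestronglyMeasurable
    (.of_forall fun v => norm_integrand_le hj h0 h1 v)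

lemma continuousOn_mixture {j : ℝ} (hj : 0 < j) : ContinuousOn (mixture j) (Icc 0 1) := by
  refine continuousOn_of_dominated (bound := fun v : ℝ => (1 + v ^ 2)⁻¹)
    (fun p _ => (continuous_integrand hj p).aestronglyMeasurable)
    (fun p hp => .of_forall fun v => norm_integrand_le hj hp.1 hp.2 v)
    integrable_inv_one_add_sq (.of_forall fun v => ?_)
  exact (((continuous_mixBase_left v).rpow_const fun _ => Or.inr hj.le).mul
    continuous_const).continuousOn

lemma mixture_zero {j : ℝ} (hj : 0 < j) : mixture j 0 = 0 := by
  simp [mixture, mixBase, Real.zero_rpow hj.ne']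

lemma mixture_half (j : ℝ) : mixture j (1 / 2) = Real.pi := by
  have h : ∀ v : ℝ, mixBase (1 / 2) v = 1 := fun v => by norm_num [mixBase]
  simp_rw [mixture, h, Real.one_rpow, one_mul, integral_univ_inv_one_add_sq]

/-- The factor `1 + v²` produced by differentiating `b(p,v)` cancels the weight `(1+v²)⁻¹`. -/
lemma hasDerivAt_integrand {j p : ℝ} (h0 : 0 < p) (h1 : p < 1) (v : ℝ) :
    HasDerivAt (fun p => mixBase p v ^ j * (1 + v ^ 2)⁻¹)
      (4 * (1 - 2 * p) * j * mixBase p v ^ j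
        / (4 * p * (1 - p) * (1 + (1 - 2 * p) ^ 2 * v ^ 2))) p := by
  have hD := mixBase_den_pos p v
  have hq : 0 < 4 * p * (1 - p) := mul_pos (by linarith) (by linarith)
  have hb := mixBase_pos h0 h1 v
  have hn : HasDerivAt (fun p : ℝ => 4 * p * (1 - p)) (4 * (1 - 2 * p)) p := by
    refine (((hasDerivAt_id' p).const_mul 4).mul ((hasDerivAt_id' p).const_sub 1)).congr_deriv ?_
    ring
  have hd : HasDerivAt (fun p : ℝ => 1 + (1 - 2 * p) ^ 2 * v ^ 2)
      (-4 * (1 - 2 * p) * v ^ 2) p := by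
    refine ((((((hasDerivAt_id' p).const_mul 2).const_sub 1).pow 2).mul_const
      (v ^ 2)).const_add 1).congr_deriv ?_
    simp only [Nat.cast_ofNat]
    ring
  have hB : HasDerivAt (fun p => mixBase p v) _ p := hn.div hd hD.ne'
  refine ((hB.rpow_const (p := j) (Or.inl hb.ne')).mul_const ((1 + v ^ 2)⁻¹)).congr_deriv ?_
  rw [Real.rpow_sub_one hb.ne']
  have hv : (1 + v ^ 2) ≠ 0 := by positivity
  generalize mixBase p v ^ j = X
  unfold mixBase
  have hp' : 1 - p ≠ 0 := by linarith
  have := hD.ne'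
  field_simp
  ring

/-- The integral over `v` of the `p`-derivative of the integrand: a multiple of the beta density. -/
lemma integral_deriv_integrand {j p : ℝ} (h0 : 0 < p) (h1 : p < 1 / 2) :
    ∫ v : ℝ, 4 * (1 - 2 * p) * j * mixBase p v ^ j
        / (4 * p * (1 - p) * (1 + (1 - 2 * p) ^ 2 * v ^ 2))
      = (j * 4 ^ j * ∫ w : ℝ, (1 + w ^ 2) ^ (-(j + 1))) * (p ^ (j - 1) * (1 - p) ^ (j - 1)) := by
  have hr : 0 < 1 - 2 * p := by linarith
  have hp' : 0 < 1 - p := by linarith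
  have key : ∀ v : ℝ, 4 * (1 - 2 * p) * j * mixBase p v ^ j
        / (4 * p * (1 - p) * (1 + (1 - 2 * p) ^ 2 * v ^ 2))
      = (1 - 2 * p) * (j * 4 ^ j * (p ^ (j - 1) * (1 - p) ^ (j - 1))) *
        (1 + ((1 - 2 * p) * v) ^ 2) ^ (-(j + 1)) := by
    intro v
    have hD := mixBase_den_pos p v
    rw [mixBase, Real.div_rpow (by positivity) hD.le, Real.mul_rpow (by positivity) hp'.le,
      Real.mul_rpow (by norm_num) h0.le, Real.rpow_sub_one h0.ne', Real.rpow_sub_one hp'.ne',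
      mul_pow, Real.rpow_neg hD.le, Real.rpow_add_one hD.ne']
    have hDj := Real.rpow_pos_of_pos hD j
    have := hD.ne'
    field_simp
  simp_rw [key]
  rw [integral_const_mul,
    Measure.integral_comp_mul_left (fun w : ℝ => (1 + w ^ 2) ^ (-(j + 1))) (1 - 2 * p),
    abs_of_pos (inv_pos.2 hr), smul_eq_mul]
  field_simp

lemma hasDerivAt_mixture {j p : ℝ} (hj : 0 < j) (h0 : 0 < p) (h1 : p < 1 / 2) :
    HasDerivAt (mixture j)
      ((j * 4 ^ j * ∫ w : ℝ, (1 + w ^ 2) ^ (-(j + 1))) * (p ^ (j - 1) * (1 - p) ^ (j - 1))) p := by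
  rw [← integral_deriv_integrand h0 h1]
  -- On the neighbourhood `(p/2, (p+1/2)/2)` of `p`, `4x(1-x) ≥ p` and `1-2x ≥ 1/2-p`.
  have hs : Ioo (p / 2) ((p + 1 / 2) / 2) ∈ 𝓝 p := Ioo_mem_nhds (by linarith) (by linarith)
  have hr : 0 < 1 / 2 - p := by linarith
  refine (hasDerivAt_integral_of_dominated_loc_of_deriv_le
    (bound := fun v : ℝ => 4 * j / (p * (1 / 2 - p) ^ 2) * (1 + v ^ 2)⁻¹) hs
    (.of_forall fun x => (continuous_integrand hj x).aestronglyMeasurable)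
    (integrable_integrand hj h0.le (by linarith)) ?_ (.of_forall fun v x hx => ?_)
    (integrable_inv_one_add_sq.const_mul _)
    (.of_forall fun v x hx => hasDerivAt_integrand (by linarith [hx.1]) (by linarith [hx.2]) v)).2
  · refine Continuous.aestronglyMeasurable (Continuous.div ?_ (by fun_prop) fun v => ?_)
    · exact continuous_const.mul ((continuous_mixBase p).rpow_const fun _ => Or.inr hj.le)
    · have := mixBase_den_pos p v
      have : 0 < 1 - p := by linarith
      positivity
  · obtain ⟨hx1, hx2⟩ := hx
    have hx0 : 0 < x := by linarith
    have hxr : 1 / 2 - p ≤ 1 - 2 * x := by linarith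
    have hb := mixBase_nonneg hx0.le (by linarith) v
    have hb1 := Real.rpow_le_one hb (mixBase_le_one x v) hj.le
    have hb0 := Real.rpow_nonneg hb j
    have hxr0 : 0 < 1 - 2 * x := by linarith
    have hx' : 0 < 1 - x := by linarith
    have hD := mixBase_den_pos x v
    rw [Real.norm_of_nonneg (by positivity), ← div_eq_mul_inv, div_div]
    have hq : p ≤ 4 * x * (1 - x) := by nlinarith
    have hr2 : (1 / 2 - p) ^ 2 ≤ (1 - 2 * x) ^ 2 := pow_le_pow_left₀ hr.le hxr 2
    have hr1 : (1 / 2 - p) ^ 2 ≤ 1 := by nlinarith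
    have hDl : (1 / 2 - p) ^ 2 * (1 + v ^ 2) ≤ 1 + (1 - 2 * x) ^ 2 * v ^ 2 := by
      nlinarith [mul_le_mul_of_nonneg_right hr2 (sq_nonneg v)]
    have hnum : 4 * (1 - 2 * x) * j * mixBase x v ^ j ≤ 4 * j := by
      have : (1 - 2 * x) * mixBase x v ^ j ≤ 1 := mul_le_one₀ (by linarith) hb0 hb1
      nlinarith
    rw [mul_assoc p]
    exact div_le_div₀ (by positivity) hnum (by positivity)
      (mul_le_mul hq hDl (by positivity) (by positivity))

lemma intervalIntegrable_beta_half {j : ℝ} (hj : 0 < j) :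
    IntervalIntegrable (fun t : ℝ => t ^ (j - 1) * (1 - t) ^ (j - 1)) volume 0 (1 / 2) := by
  refine (intervalIntegral.intervalIntegrable_rpow' (by linarith)).mul_continuousOn ?_
  refine ContinuousOn.rpow_const (by fun_prop) fun t ht => Or.inl ?_
  rw [uIcc_of_le (by norm_num)] at ht
  linarith [ht.2]

lemma mixture_eq_mul_incBeta {j p : ℝ} (hj : 0 < j) (h0 : 0 ≤ p) (h1 : p ≤ 1 / 2) :
    mixture j p = (j * 4 ^ j * ∫ w : ℝ, (1 + w ^ 2) ^ (-(j + 1))) * incBeta p j j := by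
  have h := intervalIntegral.integral_eq_sub_of_hasDerivAt_of_le h0
    ((continuousOn_mixture hj).mono (Icc_subset_Icc_right (by linarith)))
    (fun x hx => hasDerivAt_mixture hj hx.1 (hx.2.trans_le h1))
    (((intervalIntegrable_beta_half hj).mono_set (by
      rw [uIcc_of_le h0, uIcc_of_le (by norm_num)]
      exact Icc_subset_Icc_right h1)).const_mul _)
  rw [mixture_zero hj, sub_zero, intervalIntegral.integral_const_mul] at h
  exact h.symm

lemma incBeta_one {j : ℝ} (hj : 0 < j) : incBeta 1 j j = 2 * incBeta (1 / 2) j j := by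
  have hi := intervalIntegrable_beta_half hj
  have hsym : (fun t : ℝ => (1 - t) ^ (j - 1) * (1 - (1 - t)) ^ (j - 1))
      = fun t : ℝ => t ^ (j - 1) * (1 - t) ^ (j - 1) := by
    ext t
    rw [sub_sub_cancel, mul_comm]
  have hi' := hi.comp_sub_left 1
  have he := intervalIntegral.integral_comp_sub_left (a := 0) (b := 1 / 2)
    (fun t : ℝ => t ^ (j - 1) * (1 - t) ^ (j - 1)) 1
  norm_num only at hi' he
  simp only [hsym] at hi' he
  have := intervalIntegral.integral_add_adjacent_intervals hi hi'.symm
  unfold incBeta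
  rw [← this, two_mul, he]

/-- The mixture representation of `I_p(j,j)`. -/
lemma regIncBeta_eq {j p : ℝ} (hj : 0 < j) (h0 : 0 ≤ p) (h1 : p ≤ 1 / 2) :
    regIncBeta p j j = (2 * Real.pi)⁻¹ * mixture j p := by
  have hp := mixture_eq_mul_incBeta hj h0 h1
  have hh := mixture_eq_mul_incBeta (p := 1 / 2) hj (by norm_num) le_rfl
  rw [mixture_half] at hh
  rw [regIncBeta, incBeta_one hj, hp]
  have hpi := Real.pi_ne_zero
  rw [hh] at hpi ⊢
  generalize j * 4 ^ j * ∫ w : ℝ, (1 + w ^ 2) ^ (-(j + 1)) = C at hpi ⊢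
  have := left_ne_zero_of_mul hpi
  have := right_ne_zero_of_mul hpi
  field_simp

/-- Differentiation of the mixture in the exponent, with the integrability needed to compare the
derivatives. -/
lemma hasDerivAt_mixture_exponent {j p : ℝ} (hj : 0 < j) (h0 : 0 < p) (h1 : p < 1) :
    Integrable (fun v : ℝ => mixBase p v ^ j * Real.log (mixBase p v) * (1 + v ^ 2)⁻¹) ∧
    HasDerivAt (fun x => mixture x p)
      (∫ v : ℝ, mixBase p v ^ j * Real.log (mixBase p v) * (1 + v ^ 2)⁻¹) j := by
  refine hasDerivAt_integral_of_dominated_loc_of_deriv_le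
    (F := fun x v => mixBase p v ^ x * (1 + v ^ 2)⁻¹)
    (F' := fun x v => mixBase p v ^ x * Real.log (mixBase p v) * (1 + v ^ 2)⁻¹)
    (bound := fun v : ℝ => 1 / (j / 2) * (1 + v ^ 2)⁻¹) (Ioi_mem_nhds (half_lt_self hj))
    ?_ (integrable_integrand hj h0.le h1.le) ?_ (.of_forall fun v x hx => ?_)
    (integrable_inv_one_add_sq.const_mul _) (.of_forall fun v x _ => ?_)
  · filter_upwards [Ioi_mem_nhds hj] with x hx
    exact (continuous_integrand hx p).aestronglyMeasurable
  · refine Continuous.aestronglyMeasurable (Continuous.mul (Continuous.mul ?_ ?_)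
      continuous_inv_one_add_sq)
    · exact (continuous_mixBase p).rpow_const fun _ => Or.inr hj.le
    · exact (continuous_mixBase p).log fun v => (mixBase_pos h0 h1 v).ne'
  · have hb := mixBase_pos h0 h1 v
    have hb1 := mixBase_le_one p v
    have hv : 0 < (1 + v ^ 2)⁻¹ := by positivity
    rw [norm_mul, Real.norm_of_nonneg hv.le]
    refine mul_le_mul_of_nonneg_right ?_ hv.le
    have hl := Real.abs_log_mul_self_rpow_lt (mixBase p v) (j / 2) hb hb1 (half_pos hj)
    refine le_trans ?_ hl.le
    rw [Real.norm_eq_abs, mul_comm, abs_mul, abs_mul, abs_of_pos (Real.rpow_pos_of_pos hb _),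
      abs_of_pos (Real.rpow_pos_of_pos hb _)]
    exact mul_le_mul_of_nonneg_left
      (Real.rpow_le_rpow_of_exponent_ge hb hb1 (le_of_lt hx)) (abs_nonneg _)
  · exact ((Real.hasStrictDerivAt_const_rpow (mixBase_pos h0 h1 v) x).hasDerivAt).mul_const _

/-- The magnitude of the derivative of a positive mixture of decreasing exponentials. -/
lemma abs_deriv_eq {j p : ℝ} (hj : 0 < j) (h0 : 0 < p) (h1 : p < 1 / 2) :
    |deriv (fun x : ℝ => regIncBeta p x x) j| = (2 * Real.pi)⁻¹ *
      -∫ v : ℝ, mixBase p v ^ j * Real.log (mixBase p v) * (1 + v ^ 2)⁻¹ := by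
  have heq : (fun x : ℝ => regIncBeta p x x) =ᶠ[𝓝 j]
      fun x => (2 * Real.pi)⁻¹ * mixture x p := by
    filter_upwards [Ioi_mem_nhds hj] with x hx
    exact regIncBeta_eq hx h0.le h1.le
  rw [heq.deriv_eq,
    ((hasDerivAt_mixture_exponent hj h0 (by linarith)).2.const_mul _).deriv, abs_mul,
    abs_of_pos (by positivity), abs_of_nonpos]
  refine integral_nonpos fun v => ?_
  have hb := mixBase_pos h0 (by linarith) v
  exact mul_nonpos_of_nonpos_of_nonneg (mul_nonpos_of_nonneg_of_nonpos
    (Real.rpow_nonneg hb.le _) (Real.log_nonpos hb.le (mixBase_le_one p v))) (by positivity)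

/-- The magnitude of the derivative of j ↦ I_p(j,j) is strictly decreasing on (0,∞). -/
theorem abs_deriv_regIncBeta_strictAnti (p : ℝ) (hp0 : 0 < p) (hp : p < 1/2) :
    StrictAntiOn (fun j : ℝ => |deriv (fun j' : ℝ => regIncBeta p j' j') j|)
      (Set.Ioi 0) := by
  intro a ha b hb hab
  have hp1 : p < 1 := by linarith
  have hIa := (hasDerivAt_mixture_exponent (j := a) ha hp0 hp1).1
  have hIb := (hasDerivAt_mixture_exponent (j := b) hb hp0 hp1).1
  simp only
  rw [abs_deriv_eq ha hp0 hp, abs_deriv_eq hb hp0 hp]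
  refine mul_lt_mul_of_pos_left (neg_lt_neg (sub_pos.1 ?_)) (by positivity)
  rw [← integral_sub hIb hIa]
  have hpos : ∀ v : ℝ, 0 < mixBase p v ^ b * Real.log (mixBase p v) * (1 + v ^ 2)⁻¹
      - mixBase p v ^ a * Real.log (mixBase p v) * (1 + v ^ 2)⁻¹ := by
    intro v
    have h0 := mixBase_pos hp0 hp1 v
    have h1 := mixBase_lt_one hp v
    have hv : 0 < (1 + v ^ 2)⁻¹ := by positivity
    rw [← sub_mul, ← sub_mul]
    exact mul_pos (mul_pos_of_neg_of_neg
      (sub_neg.2 (Real.rpow_lt_rpow_of_exponent_gt h0 h1 hab)) (Real.log_neg h0 h1)) hv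
  rw [integral_pos_iff_support_of_nonneg (fun v => (hpos v).le) (hIb.sub hIa),
    Function.support_eq_univ fun v => (hpos v).ne']
  simp
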